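/- Consider a sequence of iterations of the Hartigan–Wong method in which only points from a set A of active points move, and let cluster i have configuration C_i^t before iteration t, with center c_i(t) = cm(C_i^t). Suppose an approximate center c_i'(0) satisfies ‖c_i'(0) − c_i(0)‖ ≤ ε, and the approximate centers are updated between iterations by the rule c_i'(t₂) = (|C_i^{t₁}|/|C_i^{t₂}|)·c_i'(t₁) + (1/|C_i^{t₂}|)·(Σ_{x∈S₊} x − Σ_{x∈S₋} x), where S₊ and S₋ are the points gained and lost by cluster i between t₁ and t₂. Then at every iteration t_j at which a new active point first moves (j ∈ [|A|]), the approximation satisfies ‖c_i'(t_j) − c_i(t_j)‖ ≤ 2|A|·ε. -/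

import Mathlib

/-- The center of mass of a finite set of points in `ℝ^d`. -/
noncomputable def centerOfMass {d : ℕ} (S : Finset (EuclideanSpace ℝ (Fin d))) :
    EuclideanSpace ℝ (Fin d) :=
  (S.card : ℝ)⁻¹ • ∑ x ∈ S, x

noncomputable instance {d : ℕ} : DecidableEq (EuclideanSpace ℝ (Fin d)) := Classical.decEq _

/-!
The update rule adds exactly the change of `∑ x ∈ C, x` to `|C| • c'`, so the weighted error
`|C| • (c' - cm C)` never changes. Hence the error at time `t` is the initial error scaled by
`|C 0| / |C t|`. Only points of `A` leave the cluster, so `|C 0| ≤ |C t| + |A| ≤ (|A| + 1) |C t|`.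
-/

open Finset

section Update

variable {K E : Type*} [Field K] [AddCommGroup E] [Module K E]

theorem card_smul_centerMass_one {S : Finset E} (hS : (#S : K) ≠ 0) :
    (#S : K) • S.centerMass (1 : E → K) id = ∑ x ∈ S, x := by
  simp [centerMass, hS]

variable [DecidableEq E]

variable (K) in
/-- The update rule for the approximate center of a cluster: `c` approximates the center of `S`,
and the result is the corresponding approximation for `T`, computed from `c`, the two
cardinalities, and the points gained and lost in passing from `S` to `T`. -/
def updateCenter (S T : Finset E) (c : E) : E :=
  ((#S : K) / #T) • c + (#T : K)⁻¹ • (∑ x ∈ T \ S, x - ∑ x ∈ S \ T, x)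

theorem card_smul_updateCenter {S T : Finset E} (hT : (#T : K) ≠ 0) (c : E) :
    (#T : K) • updateCenter K S T c = (#S : K) • c + (∑ x ∈ T, x - ∑ x ∈ S, x) := by
  rw [updateCenter, smul_add, smul_smul, mul_div_cancel₀ _ hT, smul_inv_smul₀ hT,
    sum_sdiff_sub_sum_sdiff]

theorem card_smul_updateCenter_sub_centerMass {S T : Finset E} (hS : (#S : K) ≠ 0)
    (hT : (#T : K) ≠ 0) (c : E) :
    (#T : K) • (updateCenter K S T c - T.centerMass (1 : E → K) id) =
      (#S : K) • (c - S.centerMass (1 : E → K) id) := by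
  rw [smul_sub, smul_sub, card_smul_updateCenter hT, card_smul_centerMass_one hT,
    card_smul_centerMass_one hS]
  abel

theorem card_smul_sub_centerMass_eq_of_updateCenter {C : ℕ → Finset E} {c : ℕ → E}
    (hC : ∀ t, (#(C t) : K) ≠ 0)
    (hc : ∀ t, c (t + 1) = updateCenter K (C t) (C (t + 1)) (c t)) (t : ℕ) :
    (#(C t) : K) • (c t - (C t).centerMass (1 : E → K) id) =
      (#(C 0) : K) • (c 0 - (C 0).centerMass (1 : E → K) id) := by
  induction t with
  | zero => rfl
  | succ t ih => rw [hc, card_smul_updateCenter_sub_centerMass (hC t) (hC (t + 1)), ih]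

end Update

theorem sdiff_le_of_forall_sdiff_succ_le {α : Type*} [GeneralizedCoheytingAlgebra α]
    {C : ℕ → α} {a : α} (h : ∀ t, C t \ C (t + 1) ≤ a) (t : ℕ) : C 0 \ C t ≤ a := by
  induction t with
  | zero => simp
  | succ t ih => exact (sdiff_triangle (C 0) (C t) (C (t + 1))).trans (sup_le ih (h t))

theorem card_le_card_add_one_mul_card_of_sdiff_subset {α : Type*} [DecidableEq α]
    {S T A : Finset α} (hT : T.Nonempty) (h : S \ T ⊆ A) : #S ≤ (#A + 1) * #T :=
  calc
    #S ≤ #(S \ T) + #T := card_le_card_sdiff_add_card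
    _ ≤ #A + #T := by gcongr
    _ ≤ #A * #T + #T := by gcongr; exact Nat.le_mul_of_pos_right _ hT.card_pos
    _ = (#A + 1) * #T := by ring

theorem approximate_center_tracking_general {E : Type*} [SeminormedAddCommGroup E]
    [NormedSpace ℝ E] [DecidableEq E] {A : Finset E} {ε : ℝ} {C : ℕ → Finset E} {c : ℕ → E}
    (hne : ∀ t, (C t).Nonempty) (hlost : ∀ t, C t \ C (t + 1) ⊆ A)
    (hc : ∀ t, c (t + 1) = updateCenter ℝ (C t) (C (t + 1)) (c t))
    (h0 : ‖c 0 - (C 0).centerMass (1 : E → ℝ) id‖ ≤ ε) (t : ℕ) :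
    ‖c t - (C t).centerMass (1 : E → ℝ) id‖ ≤ (#A + 1) * ε := by
  have hpos (t : ℕ) : (0 : ℝ) < #(C t) := Nat.cast_pos.2 (hne t).card_pos
  have hcard : (#(C 0) : ℝ) ≤ (#A + 1) * #(C t) := mod_cast
    card_le_card_add_one_mul_card_of_sdiff_subset (hne t)
      (sdiff_le_of_forall_sdiff_succ_le hlost t)
  have herror := congrArg norm
    (card_smul_sub_centerMass_eq_of_updateCenter (fun t ↦ (hpos t).ne') hc t)
  simp only [norm_smul, Real.norm_natCast] at herror
  refine le_of_mul_le_mul_left ?_ (hpos t)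
  calc
    #(C t) * ‖c t - (C t).centerMass (1 : E → ℝ) id‖
      = #(C 0) * ‖c 0 - (C 0).centerMass (1 : E → ℝ) id‖ := herror
    _ ≤ ((#A + 1) * #(C t)) * ε := by gcongr
    _ = #(C t) * ((#A + 1) * ε) := by ring

theorem centerOfMass_eq_centerMass {d : ℕ} (S : Finset (EuclideanSpace ℝ (Fin d))) :
    centerOfMass S = S.centerMass (1 : EuclideanSpace ℝ (Fin d) → ℝ) id := by
  simp [centerOfMass, centerMass]

/-- Consider a sequence of Hartigan--Wong iterations in which only points of
the (nonempty) active set `A` move: the configuration `Cfg t` of cluster `i` before iteration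
`t` is never empty and changes in each iteration by gaining or losing at most one point of `A`.
If an approximate center `c'` satisfies `‖c' 0 − cm(Cfg 0)‖ ≤ ε` and is updated between
iterations by the rule
`c' (t+1) = (|Cfg t|/|Cfg (t+1)|)·c' t + (1/|Cfg (t+1)|)·(Σ_{x∈S₊} x − Σ_{x∈S₋} x)`
(where `S₊ = Cfg (t+1) \ Cfg t` are the gained and `S₋ = Cfg t \ Cfg (t+1)` the lost points),
then at every iteration `t` (in particular at each iteration at which a new active point
first moves) we have `‖c' t − cm(Cfg t)‖ ≤ 2|A|·ε`. -/
theorem approximate_center_tracking {d : ℕ} (A : Finset (EuclideanSpace ℝ (Fin d)))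
    (hA : A.Nonempty) (ε : ℝ) (hε : 0 ≤ ε)
    (Cfg : ℕ → Finset (EuclideanSpace ℝ (Fin d)))
    (hne : ∀ t, (Cfg t).Nonempty)
    (hstep_card : ∀ t, ((Cfg (t + 1) \ Cfg t) ∪ (Cfg t \ Cfg (t + 1))).card ≤ 1)
    (hstep_active : ∀ t, (Cfg (t + 1) \ Cfg t) ∪ (Cfg t \ Cfg (t + 1)) ⊆ A)
    (c' : ℕ → EuclideanSpace ℝ (Fin d))
    (hupd : ∀ t, c' (t + 1)
      = (((Cfg t).card : ℝ) / ((Cfg (t + 1)).card : ℝ)) • c' t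
          + (((Cfg (t + 1)).card : ℝ)⁻¹)
              • ((∑ x ∈ Cfg (t + 1) \ Cfg t, x) - ∑ x ∈ Cfg t \ Cfg (t + 1), x))
    (h0 : ‖c' 0 - centerOfMass (Cfg 0)‖ ≤ ε) :
    ∀ t, ‖c' t - centerOfMass (Cfg t)‖ ≤ 2 * A.card * ε := by
  simp only [centerOfMass_eq_centerMass] at h0 ⊢
  have hcard : (#A + 1 : ℝ) ≤ 2 * #A := add_one_le_two_mul (mod_cast hA.card_pos)
  exact fun t ↦ (approximate_center_tracking_general hne
    (fun t ↦ subset_union_right.trans (hstep_active t)) hupd h0 t).trans (by gcongr)
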